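/- Let G be an assigned graph with vertex set partitioned as I ⊔ F ⊔ U. If ρ_G(H) > 0 for every nonempty subgraph H of G, then G has an I,F-partition 𝓘 ⊔ 𝓕 such that I ⊆ 𝓘 and F ⊆ 𝓕. -/

import Mathlib

open SimpleGraph

noncomputable def edgeCount {V : Type*} (G : SimpleGraph V) : ℕ := Nat.card G.edgeSet

noncomputable def deg {V : Type*} (G : SimpleGraph V) (v : V) : ℕ := Nat.card (G.neighborSet v)

def TwoIndependent {V : Type*} (G : SimpleGraph V) (S : Set V) : Prop :=
  ∀ u ∈ S, ∀ v ∈ S, u ≠ v → ¬ G.Adj u v ∧ ∀ w, ¬ (G.Adj u w ∧ G.Adj w v)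

def IsIFPartition {V : Type*} (G : SimpleGraph V) (A B : Set V) : Prop :=
  A ∪ B = Set.univ ∧ Disjoint A B ∧ TwoIndependent G A ∧ (G.induce B).IsAcyclic

def IsAssignment {V : Type*} (I F U : Set V) : Prop :=
  I ∪ F ∪ U = Set.univ ∧ Disjoint I F ∧ Disjoint I U ∧ Disjoint F U

noncomputable def rho {V : Type*} (G : SimpleGraph V) (I F U : Set V) (H : G.Subgraph) : ℤ :=
  (H.verts ∩ I).ncard + 4 * (H.verts ∩ F).ncard + 5 * (H.verts ∩ U).ncard
    - 4 * Nat.card H.edgeSet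

noncomputable def rhoSet {V : Type*} (G : SimpleGraph V) (I F U : Set V) (S : Set V) : ℤ :=
  (S ∩ I).ncard + 4 * (S ∩ F).ncard + 5 * (S ∩ U).ncard - 4 * edgeCount (G.induce S)

def IsCounterexample {V : Type*} [Fintype V] (G : SimpleGraph V) (I F U : Set V) : Prop :=
  IsAssignment I F U ∧
  (∀ H : G.Subgraph, H.verts.Nonempty → 0 < rho G I F U H) ∧
  ¬ ∃ A B : Set V, IsIFPartition G A B ∧ I ⊆ A ∧ F ⊆ B

def IsMinCounterexample {V : Type*} [Fintype V] (G : SimpleGraph V) (I F U : Set V) : Prop :=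
  IsCounterexample G I F U ∧
  ∀ (n : ℕ) (G' : SimpleGraph (Fin n)) (I' F' U' : Set (Fin n)),
    IsCounterexample G' I' F' U' →
    Fintype.card V + edgeCount G ≤ n + edgeCount G'

def IsThread {V : Type*} (G : SimpleGraph V) (I F U : Set V) (p : List V) : Prop :=
  p ≠ [] ∧ p.Nodup ∧ p.Chain' G.Adj ∧ (∀ v ∈ p, v ∈ U ∧ deg G v = 2) ∧
  (∀ w, w ∉ p → (∃ a ∈ p, G.Adj a w) → 3 ≤ deg G w ∨ w ∈ I ∪ F)

def BordersThread {V : Type*} (G : SimpleGraph V) (p : List V) (w : V) : Prop :=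
  w ∉ p ∧ ∃ a ∈ p, G.Adj a w

def IsStarForest {V : Type*} (H : SimpleGraph V) : Prop :=
  H.IsAcyclic ∧ ∀ a b c d : V, H.Adj a b → H.Adj b c → H.Adj c d → a = c ∨ b = d

def IsStarColoring {V : Type*} {k : ℕ} (G : SimpleGraph V) (c : V → Fin k) : Prop :=
  (∀ u v, G.Adj u v → c u ≠ c v) ∧
  ∀ i j : Fin k, IsStarForest (G.induce {v | c v = i ∨ c v = j})

def StarColorable {V : Type*} (G : SimpleGraph V) (k : ℕ) : Prop :=
  ∃ c : V → Fin k, IsStarColoring G c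

def MadLt {V : Type*} (G : SimpleGraph V) (q : ℚ) : Prop :=
  ∀ H : G.Subgraph, H.verts.Nonempty →
    (2 * (Nat.card H.edgeSet : ℚ)) / (H.verts.ncard : ℚ) < q

/-!
Once `I` is placed in the independent set, its neighbors must lie in the forest and may have no
further independent neighbor. So the problem is to partition a *marked* graph, in which some
vertices are forced into the forest and some are guarded against independent neighbors; a mark
lowers the weight of a vertex, and every nonempty set of vertices has positive potential.

In a minimal counterexample, a proper subset `S` of potential at most `2` has at most one edge to
each vertex outside. Take a partition of `S`, contract `S` to a single vertex that is forced and
guarded, and mark the outer neighbors of the independent part of `S` as forced and guarded. A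
partition of this smaller graph would combine with that of `S`, so it is not sparse, and the
failing set shows that every proper subset has potential at least `2`, and at least `3` if it has
two or more vertices. This gap leaves room for extra marks on proper subgraphs, so two adjacent
unmarked vertices of degree two can only occur between guarded vertices, and no unforced vertex
has only unmarked neighbors of degree two. Replacing a forced, unguarded vertex of degree two by an
edge between its neighbors preserves sparsity, so it has no unmarked neighbor of degree two either.
Discharging from the unmarked vertices of degree two to the other vertices then bounds the
potential of the whole graph by `0`.
-/

namespace IFPartition

open Finset
open scoped Classical

variable {α : Type*} {G : SimpleGraph α}

section Degrees

/-- The number of neighbors of `v` in the finite set `T`; the vertex `v` need not lie in `T`. -/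
noncomputable def degreeIn (G : SimpleGraph α) (T : Finset α) (v : α) : ℕ := #{u ∈ T | G.Adj v u}

/-- The number of ordered pairs in `A × B` that are adjacent. In particular `edgesBetween G T T`
is twice the number of edges spanned by `T`. -/
noncomputable def edgesBetween (G : SimpleGraph α) (A B : Finset α) : ℕ := ∑ a ∈ A, degreeIn G B a

variable {A B S T : Finset α} {a b u v : α}

lemma degreeIn_mono (h : S ⊆ T) (v : α) : degreeIn G S v ≤ degreeIn G T v :=
  card_le_card (filter_subset_filter _ h)

lemma degreeIn_mono_graph {G' : SimpleGraph α} (h : G ≤ G') (T : Finset α) (v : α) :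
    degreeIn G T v ≤ degreeIn G' T v :=
  card_le_card (monotone_filter_right _ fun _ _ huv ↦ h huv)

lemma degreeIn_congr {G' : SimpleGraph α} (h : ∀ u ∈ T, (G.Adj v u ↔ G'.Adj v u)) :
    degreeIn G T v = degreeIn G' T v :=
  congrArg card (filter_congr h)

lemma degreeIn_ne_zero_iff : degreeIn G T v ≠ 0 ↔ ∃ u ∈ T, G.Adj v u := by
  simp [degreeIn, filter_eq_empty_iff]

lemma degreeIn_eq_zero_iff : degreeIn G T v = 0 ↔ ∀ u ∈ T, ¬ G.Adj v u := by
  simp [degreeIn, filter_eq_empty_iff]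

lemma degreeIn_ne_zero (hu : u ∈ T) (h : G.Adj v u) : degreeIn G T v ≠ 0 :=
  degreeIn_ne_zero_iff.mpr ⟨u, hu, h⟩

lemma degreeIn_union (h : Disjoint A B) (v : α) :
    degreeIn G (A ∪ B) v = degreeIn G A v + degreeIn G B v := by
  rw [degreeIn, filter_union, card_union_of_disjoint (disjoint_filter_filter h)]
  rfl

lemma degreeIn_singleton (u v : α) : degreeIn G {u} v = if G.Adj v u then 1 else 0 := by
  rw [degreeIn, filter_singleton, apply_ite card, card_singleton, card_empty]

lemma degreeIn_insert (h : u ∉ T) (v : α) :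
    degreeIn G (insert u T) v = degreeIn G T v + if G.Adj v u then 1 else 0 := by
  rw [insert_eq, union_comm, degreeIn_union (disjoint_singleton_right.mpr h), degreeIn_singleton]

lemma degreeIn_insert_le (T : Finset α) (u v : α) :
    degreeIn G (insert u T) v ≤ degreeIn G T v + 1 := by
  by_cases h : u ∈ T
  · simp [h]
  · grind [degreeIn_insert]

lemma degreeIn_erase_add_one (hu : u ∈ T) (h : G.Adj v u) :
    degreeIn G (T.erase u) v + 1 = degreeIn G T v := by
  simpa [insert_erase hu, h] using (degreeIn_insert (G := G) (notMem_erase u T) v).symm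

lemma degreeIn_insert_self (T : Finset α) (v : α) : degreeIn G (insert v T) v = degreeIn G T v := by
  simp [degreeIn, filter_insert]

lemma degreeIn_sdiff_add (h : S ⊆ T) (v : α) :
    degreeIn G (T \ S) v + degreeIn G S v = degreeIn G T v := by
  rw [← degreeIn_union sdiff_disjoint, sdiff_union_of_subset h]

lemma degreeIn_le_card (h : ∀ u ∈ T, G.Adj v u → u ∈ S) : degreeIn G T v ≤ #S :=
  card_le_card fun u hu ↦ h u (mem_filter.mp hu).1 (mem_filter.mp hu).2

lemma degreeIn_lt_card (hv : v ∈ T) : degreeIn G T v < #T :=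
  card_lt_card (filter_ssubset.mpr ⟨v, hv, G.irrefl⟩)

lemma two_le_degreeIn (hab : a ≠ b) (ha : a ∈ T) (hb : b ∈ T) (hva : G.Adj v a)
    (hvb : G.Adj v b) : 2 ≤ degreeIn G T v :=
  one_lt_card.mpr ⟨a, by simp [ha, hva], b, by simp [hb, hvb], hab⟩

lemma exists_other_neighbor (hd : degreeIn G T v = 2) (ha : a ∈ T) (hva : G.Adj v a) :
    ∃ b ∈ T, b ≠ a ∧ G.Adj v b ∧ ∀ u ∈ T, G.Adj v u → u = a ∨ u = b := by
  obtain ⟨p, q, hpq, hT⟩ := card_eq_two.mp hd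
  simp only [Finset.ext_iff, mem_filter, mem_insert, mem_singleton] at hT
  have hp := (hT p).mpr (.inl rfl)
  have hq := (hT q).mpr (.inr rfl)
  rcases (hT a).mp ⟨ha, hva⟩ with rfl | rfl
  · exact ⟨q, hq.1, hpq.symm, hq.2, fun u hu hvu ↦ (hT u).mp ⟨hu, hvu⟩⟩
  · exact ⟨p, hp.1, hpq, hp.2, fun u hu hvu ↦ ((hT u).mp ⟨hu, hvu⟩).symm⟩

lemma edgesBetween_comm (A B : Finset α) : edgesBetween G A B = edgesBetween G B A := by
  simp only [edgesBetween, degreeIn]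
  exact (sum_card_bipartiteAbove_eq_sum_card_bipartiteBelow G.Adj).trans
    (by simp only [bipartiteBelow, G.adj_comm])

lemma edgesBetween_mono_right (h : S ⊆ T) (A : Finset α) :
    edgesBetween G A S ≤ edgesBetween G A T :=
  sum_le_sum fun a _ ↦ degreeIn_mono h a

lemma edgesBetween_congr {G' : SimpleGraph α}
    (h : ∀ u ∈ A, ∀ v ∈ B, (G.Adj u v ↔ G'.Adj u v)) :
    edgesBetween G A B = edgesBetween G' A B :=
  sum_congr rfl fun u hu ↦ degreeIn_congr (h u hu)

lemma edgesBetween_union_right (h : Disjoint S T) (A : Finset α) :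
    edgesBetween G A (S ∪ T) = edgesBetween G A S + edgesBetween G A T := by
  simp only [edgesBetween, degreeIn_union h, sum_add_distrib]

lemma edgesBetween_union_self (h : Disjoint A B) :
    edgesBetween G (A ∪ B) (A ∪ B) =
      edgesBetween G A A + edgesBetween G B B + 2 * edgesBetween G A B := by
  have hAB := edgesBetween_comm (G := G) A B
  rw [edgesBetween, sum_union h]
  simp only [degreeIn_union h, sum_add_distrib]
  simp only [edgesBetween] at hAB ⊢
  omega

lemma edgesBetween_singleton_left (v : α) (T : Finset α) :
    edgesBetween G {v} T = degreeIn G T v :=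
  sum_singleton _ _

lemma edgesBetween_singleton_self (v : α) : edgesBetween G {v} {v} = 0 := by
  simp [edgesBetween_singleton_left, degreeIn_singleton]

lemma edgesBetween_insert_self (h : v ∉ T) :
    edgesBetween G (insert v T) (insert v T) = edgesBetween G T T + 2 * degreeIn G T v := by
  rw [insert_eq, edgesBetween_union_self (disjoint_singleton_left.mpr h),
    edgesBetween_singleton_self, edgesBetween_singleton_left, zero_add]

lemma edgesBetween_filter_degreeIn_ne_zero (A B : Finset α) :
    edgesBetween G {a ∈ A | degreeIn G B a ≠ 0} B = edgesBetween G A B :=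
  sum_filter_ne_zero A

lemma card_filter_degreeIn_ne_zero_le (A B : Finset α) :
    #{a ∈ A | degreeIn G B a ≠ 0} ≤ edgesBetween G A B := by
  rw [card_filter]
  exact sum_le_sum fun a _ ↦ by split_ifs <;> omega

lemma edgesBetween_sup {H : SimpleGraph α} (h : Disjoint G H) (A B : Finset α) :
    edgesBetween (G ⊔ H) A B = edgesBetween G A B + edgesBetween H A B := by
  rw [edgesBetween, edgesBetween, edgesBetween, ← sum_add_distrib]
  refine sum_congr rfl fun a _ ↦ ?_
  simp only [degreeIn, sup_adj, filter_or]
  exact card_union_of_disjoint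
    (disjoint_filter.mpr fun b _ ↦ disjoint_left.mp h a b)

lemma edgesBetween_edge_self (hab : a ≠ b) (T : Finset α) :
    edgesBetween (edge a b) T T = if a ∈ T ∧ b ∈ T then 2 else 0 := by
  have hdeg (u : α) : degreeIn (edge a b) T u =
      (if a = u then if b ∈ T then 1 else 0 else 0) +
        if b = u then if a ∈ T then 1 else 0 else 0 := by
    trans #(if a = u then T ∩ {b} else if b = u then T ∩ {a} else ∅)
    · refine congrArg card (Finset.ext fun x ↦ ?_)
      simp only [edge_adj, mem_filter]
      grind
    · split_ifs <;> simp_all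
  simp only [edgesBetween, hdeg, sum_add_distrib, sum_ite_eq]
  grind

end Degrees

section Forests

/-- `B` induces a forest: `G[B]` is 1-degenerate, which for a finite set `B` is equivalent to
having no cycle and is the form in which forests are built up vertex by vertex. -/
def IsForestOn (G : SimpleGraph α) (B : Finset α) : Prop :=
  ∀ T ⊆ B, T.Nonempty → ∃ v ∈ T, degreeIn G T v ≤ 1

variable {B C T : Finset α} {a b v : α}

lemma isForestOn_empty : IsForestOn G ∅ := fun T hT hne ↦ by
  simp [subset_empty.mp hT] at hne

lemma IsForestOn.mono (h : IsForestOn G C) (hBC : B ⊆ C) : IsForestOn G B :=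
  fun T hT ↦ h T (hT.trans hBC)

lemma IsForestOn.congr {G' : SimpleGraph α} (h : IsForestOn G B)
    (hadj : ∀ u ∈ B, ∀ v ∈ B, (G.Adj u v ↔ G'.Adj u v)) : IsForestOn G' B := by
  intro T hT hne
  obtain ⟨v, hv, hd⟩ := h T hT hne
  exact ⟨v, hv, (degreeIn_congr fun u hu ↦ hadj v (hT hv) u (hT hu)) ▸ hd⟩

lemma IsForestOn.extend (h : IsForestOn G B)
    (hd : ∀ v ∈ C, v ∉ B → degreeIn G C v ≤ 1) : IsForestOn G C := by
  intro T hT hne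
  by_cases hTB : T ⊆ B
  · exact h T hTB hne
  · obtain ⟨v, hv, hvB⟩ := not_subset.mp hTB
    exact ⟨v, hv, (degreeIn_mono hT v).trans (hd v (hT hv) hvB)⟩

lemma exists_degreeIn_le_one (h : edgesBetween G T T < 2 * #T) :
    ∃ v ∈ T, degreeIn G T v ≤ 1 := by
  by_contra! hd
  have := card_nsmul_le_sum T _ 2 hd
  rw [smul_eq_mul, mul_comm] at this
  exact this.not_gt h

lemma IsForestOn.edgesBetween_add_two_le (h : IsForestOn G B) (hT : T ⊆ B) (hne : T.Nonempty) :
    edgesBetween G T T + 2 ≤ 2 * #T := by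
  induction T using Finset.strongInduction with
  | H T ih =>
    obtain ⟨v, hv, hd⟩ := h T hT hne
    have hedges := edgesBetween_insert_self (G := G) (notMem_erase v T)
    have hdeg := degreeIn_mono (G := G) (erase_subset v T) v
    have hcard := card_erase_add_one hv
    rw [insert_erase hv] at hedges
    rcases (T.erase v).eq_empty_or_nonempty with hempty | hne'
    · have : T = {v} := by grind
      simp [this, edgesBetween_singleton_self]
    · have := ih _ (erase_ssubset hv) ((erase_subset v T).trans hT) hne'
      omega

lemma IsForestOn.isAcyclic_induce (h : IsForestOn G B) : (G.induce (B : Set α)).IsAcyclic := by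
  intro v c hc
  set T : Finset α := c.support.toFinset.image Subtype.val with hT
  have hmem {u : (B : Set α)} (hu : u ∈ c.support) : (u : α) ∈ T := by simpa [hT] using hu
  obtain ⟨x, hx, hd⟩ := h T (by grind) ⟨v, hmem c.start_mem_support⟩
  obtain ⟨u, hu, rfl⟩ := mem_image.mp hx
  obtain ⟨a, b, hab, hN⟩ := Set.ncard_eq_two.mp
    (hc.ncard_neighborSet_toSubgraph_eq_two (List.mem_toFinset.mp hu))
  have ha : c.toSubgraph.Adj u a := by simp [← Subgraph.mem_neighborSet, hN]
  have hb : c.toSubgraph.Adj u b := by simp [← Subgraph.mem_neighborSet, hN]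
  have h2 : 2 ≤ degreeIn G T (u : α) := two_le_degreeIn (Subtype.coe_injective.ne hab)
    (hmem (c.mem_verts_toSubgraph.mp ha.snd_mem)) (hmem (c.mem_verts_toSubgraph.mp hb.snd_mem))
    ha.adj_sub hb.adj_sub
  omega

lemma IsForestOn.insert_of_sup_edge (h : IsForestOn (G ⊔ edge a b) B) (hab : a ≠ b)
    (hnadj : ¬ G.Adj a b) (hN : ∀ u ∈ B, G.Adj v u → u = a ∨ u = b) :
    IsForestOn G (insert v B) := by
  have hdisj : Disjoint G (edge a b) := (disjoint_edge G).mpr hnadj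
  intro T hT hne
  by_cases hvT : v ∈ T
  · have hsub : T.erase v ⊆ B := by grind
    have hdeg := degreeIn_insert_self (G := G) (T.erase v) v
    rw [insert_erase hvT] at hdeg
    by_cases hboth : a ∈ T.erase v ∧ b ∈ T.erase v
    · apply exists_degreeIn_le_one
      have hd : degreeIn G (T.erase v) v ≤ #{a, b} := degreeIn_le_card (by grind)
      have hforest := h.edgesBetween_add_two_le hsub ⟨a, hboth.1⟩
      have hedges := edgesBetween_insert_self (G := G) (notMem_erase v T)
      rw [edgesBetween_sup hdisj, edgesBetween_edge_self hab, if_pos hboth] at hforest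
      rw [insert_erase hvT] at hedges
      have := card_erase_add_one hvT
      grind
    · refine ⟨v, hvT, hdeg ▸ ?_⟩
      rcases not_and_or.mp hboth with ha | hb
      · exact degreeIn_le_card (S := {b}) (by grind)
      · exact degreeIn_le_card (S := {a}) (by grind)
  · obtain ⟨u, hu, hd⟩ := h T (by grind) hne
    exact ⟨u, hu, (degreeIn_mono_graph le_sup_left T u).trans hd⟩

end Forests

section Rewiring

/-- The graph obtained from `G` by deleting all edges at `g` and joining `g` to the vertices of `Y`
instead. With `Y` the set of vertices having a neighbor in some set `S`, this contracts `S`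
to `g`. -/
def rewire (G : SimpleGraph α) (g : α) (Y : Set α) : SimpleGraph α where
  Adj u v := (u ≠ g ∧ v ≠ g ∧ G.Adj u v) ∨ (u = g ∧ v ≠ g ∧ v ∈ Y) ∨ (v = g ∧ u ≠ g ∧ u ∈ Y)
  symm := ⟨fun u v h ↦ by have := G.adj_comm u v; tauto⟩
  loopless := ⟨fun u h ↦ by have := G.irrefl (v := u); tauto⟩

variable {B C T : Finset α} {g u v : α} {Y : Set α}

lemma rewire_adj_of_ne (hu : u ≠ g) (hv : v ≠ g) : (rewire G g Y).Adj u v ↔ G.Adj u v := by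
  simp [rewire, hu, hv]

lemma rewire_adj_left (hv : v ≠ g) : (rewire G g Y).Adj g v ↔ v ∈ Y := by
  simp [rewire, hv]

lemma degreeIn_rewire_self (hg : g ∉ T) : degreeIn (rewire G g Y) T g = #{v ∈ T | v ∈ Y} :=
  congrArg card (filter_congr fun _ hv ↦ rewire_adj_left (ne_of_mem_of_not_mem hv hg))

lemma edgesBetween_rewire (hg : g ∉ T) :
    edgesBetween (rewire G g Y) T T = edgesBetween G T T :=
  edgesBetween_congr fun _ hu _ hv ↦
    rewire_adj_of_ne (ne_of_mem_of_not_mem hu hg) (ne_of_mem_of_not_mem hv hg)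

lemma IsForestOn.union_of_rewire (hB : IsForestOn G B)
    (hC : IsForestOn (rewire G g Y) (insert g C)) (hg : g ∉ C) (hBC : Disjoint B C)
    (hd : ∀ c ∈ C, degreeIn G B c ≤ 1) (hY : ∀ c ∈ C, degreeIn G B c ≠ 0 → c ∈ Y) :
    IsForestOn G (B ∪ C) := by
  intro T hT hne
  obtain ⟨TB, hTB, TC, hTC, rfl⟩ : ∃ TB ⊆ B, ∃ TC ⊆ C, T = TC ∪ TB :=
    ⟨T ∩ B, inter_subset_right, T ∩ C, inter_subset_right, by grind⟩
  have hgTC : g ∉ TC := fun h ↦ hg (hTC h)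
  rcases TB.eq_empty_or_nonempty with rfl | hneB
  · have hforest : IsForestOn G C := (hC.mono (subset_insert g C)).congr fun u hu v hv ↦
      rewire_adj_of_ne (ne_of_mem_of_not_mem hu hg) (ne_of_mem_of_not_mem hv hg)
    exact hforest _ (by simpa using hTC) hne
  · have hdisj : Disjoint TC TB := (hBC.mono hTB hTC).symm
    have hcross : edgesBetween G TC TB ≤ #{v ∈ TC | v ∈ Y} := by
      rw [card_filter]
      refine sum_le_sum fun c hc ↦ ?_
      have hle := degreeIn_mono (G := G) hTB c
      have := hd c (hTC hc)
      have := hY c (hTC hc)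
      split_ifs <;> grind
    have hcontracted :=
      hC.edgesBetween_add_two_le (insert_subset_insert g hTC) ⟨g, mem_insert_self g TC⟩
    rw [edgesBetween_insert_self hgTC, edgesBetween_rewire hgTC, degreeIn_rewire_self hgTC,
      card_insert_of_notMem hgTC] at hcontracted
    have hforest := hB.edgesBetween_add_two_le hTB hneB
    apply exists_degreeIn_le_one
    rw [edgesBetween_union_self hdisj, card_union_of_disjoint hdisj]
    omega

end Rewiring

section Potential

/-- The potential of the subgraph of `G` induced by `T`, for vertex weights `w`. Since
`edgesBetween G T T` counts every edge twice, an edge costs `4`. -/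
noncomputable def potential (G : SimpleGraph α) (w : α → ℤ) (T : Finset α) : ℤ :=
  ∑ v ∈ T, w v - 2 * edgesBetween G T T

/-- Every nonempty induced subgraph of `G[W]` has positive potential. -/
def IsSparse (G : SimpleGraph α) (w : α → ℤ) (W : Finset α) : Prop :=
  ∀ T ⊆ W, T.Nonempty → 0 < potential G w T

variable {w : α → ℤ} {S T W : Finset α} {v : α}

lemma potential_singleton (G : SimpleGraph α) (w : α → ℤ) (v : α) : potential G w {v} = w v := by
  simp [potential, edgesBetween_singleton_self]

lemma potential_union (h : Disjoint S T) :
    potential G w (S ∪ T) = potential G w S + potential G w T - 4 * edgesBetween G S T := by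
  simp only [potential, sum_union h, edgesBetween_union_self h]
  push_cast
  ring

lemma potential_insert (h : v ∉ T) :
    potential G w (insert v T) = potential G w T + w v - 4 * degreeIn G T v := by
  rw [insert_eq, potential_union (disjoint_singleton_left.mpr h), potential_singleton,
    edgesBetween_singleton_left, add_comm (w v)]

lemma IsSparse.mono (h : IsSparse G w W) (hT : T ⊆ W) : IsSparse G w T :=
  fun _ hS ↦ h _ (hS.trans hT)

end Potential

section Markings

/-- Constraints on a partition into an independent set and a forest: the vertices of `forced` have
to lie in the forest, and those of `guarded` may not have a neighbor in the independent set.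
A guarded vertex stands for a vertex that already has a neighbor in a fixed part of the
independent set. -/
structure Marking (α : Type*) where
  forced : Set α
  guarded : Set α

namespace Marking

/-- Additionally force all vertices of `X` into the forest. -/
def force (M : Marking α) (X : Set α) : Marking α := ⟨M.forced ∪ X, M.guarded⟩

/-- Additionally guard all vertices of `X`. -/
def guard (M : Marking α) (X : Set α) : Marking α := ⟨M.forced, M.guarded ∪ X⟩

/-- The weight of a vertex of a marked graph; unmarked vertices have weight `5` and forced ones
`4`, as the classes `U` and `F` of an assigned graph. -/
noncomputable def weight (M : Marking α) (v : α) : ℤ :=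
  5 - (if v ∈ M.forced then 1 else 0) - if v ∈ M.guarded then 2 else 0

variable {M : Marking α} {v : α}

lemma two_le_weight (M : Marking α) (v : α) : 2 ≤ M.weight v := by
  grind [weight]

lemma weight_le_five (M : Marking α) (v : α) : M.weight v ≤ 5 := by
  grind [weight]

lemma weight_le_four (h : v ∈ M.forced) : M.weight v ≤ 4 := by
  grind [weight]

lemma weight_le_three (h : v ∈ M.guarded) : M.weight v ≤ 3 := by
  grind [weight]

lemma weight_of_notMem (hf : v ∉ M.forced) (hg : v ∉ M.guarded) : M.weight v = 5 := by
  simp [weight, hf, hg]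

end Marking

lemma potential_le_five_mul_card (G : SimpleGraph α) (M : Marking α) (T : Finset α) :
    potential G M.weight T ≤ 5 * #T := by
  have := sum_le_card_nsmul T _ _ fun v _ ↦ M.weight_le_five v
  rw [nsmul_eq_mul] at this
  simp only [potential]
  lia

lemma potential_le_potential_force (G : SimpleGraph α) (M : Marking α) {X : Set α}
    {S T : Finset α} (h : ∀ v ∈ T, v ∈ X → v ∈ S) :
    potential G M.weight T ≤ potential G (M.force X).weight T + #S := by
  have hweight : ∑ v ∈ T, M.weight v ≤ ∑ v ∈ T, ((M.force X).weight v + if v ∈ X then 1 else 0) :=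
    sum_le_sum fun v _ ↦ by simp only [Marking.weight, Marking.force]; grind
  have hcard : #{v ∈ T | v ∈ X} ≤ #S := card_le_card fun v hv ↦ by grind
  rw [sum_add_distrib, sum_boole] at hweight
  simp only [potential]
  lia

lemma potential_le_potential_guard (G : SimpleGraph α) (M : Marking α) {X : Set α}
    {S T : Finset α} (h : ∀ v ∈ T, v ∈ X → v ∈ S) :
    potential G M.weight T ≤ potential G (M.guard X).weight T + 2 * #S := by
  have hweight : ∑ v ∈ T, M.weight v ≤ ∑ v ∈ T, ((M.guard X).weight v + if v ∈ X then 2 else 0) :=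
    sum_le_sum fun v _ ↦ by simp only [Marking.weight, Marking.guard]; grind
  have hcard : #{v ∈ T | v ∈ X} ≤ #S := card_le_card fun v hv ↦ by grind
  rw [sum_add_distrib, ← sum_filter, sum_const, nsmul_eq_mul, mul_comm] at hweight
  simp only [potential]
  lia

lemma potential_le_potential_force_guard (G : SimpleGraph α) (M : Marking α) {X : Set α}
    {S T : Finset α} (h : ∀ v ∈ T, v ∈ X → v ∈ S) :
    potential G M.weight T ≤ potential G ((M.force X).guard X).weight T + 3 * #S := by
  have hforce := potential_le_potential_force G M h
  have hguard := potential_le_potential_guard G (M.force X) h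
  linarith

end Markings

section Colorings

/-- `A` and `W \ A` split `W` into an independent set and a forest respecting the marking `M`, and
every vertex of `W` has at most one neighbor in `A`: two vertices of `A` may be joined by a path
of length two only outside `W`. -/
structure IsIFColoring (G : SimpleGraph α) (M : Marking α) (W A : Finset α) : Prop where
  subset : A ⊆ W
  notMem_forced : ∀ v ∈ A, v ∉ M.forced
  degreeIn_le_one : ∀ v ∈ W, degreeIn G A v ≤ 1
  degreeIn_eq_zero : ∀ v ∈ W, v ∈ A ∨ v ∈ M.guarded → degreeIn G A v = 0
  isForestOn : IsForestOn G (W \ A)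

namespace IsIFColoring

variable {M M' : Marking α} {G' : SimpleGraph α} {A B R S W W' : Finset α} {a b v : α} {X : Set α}

lemma mono (h : IsIFColoring G' M' W' A) (hW : W ⊆ W') (hA : A ⊆ W)
    (hadj : ∀ u ∈ W, ∀ v ∈ W, (G'.Adj u v ↔ G.Adj u v))
    (hforced : ∀ v ∈ W, v ∈ M.forced → v ∈ M'.forced)
    (hguarded : ∀ v ∈ W, v ∈ M.guarded → v ∈ M'.guarded) : IsIFColoring G M W A := by
  have hdeg (v) (hv : v ∈ W) : degreeIn G' A v = degreeIn G A v :=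
    degreeIn_congr fun u hu ↦ hadj v hv u (hA hu)
  refine ⟨hA, fun v hv hf ↦ h.notMem_forced v hv (hforced v (hA hv) hf),
    fun v hv ↦ hdeg v hv ▸ h.degreeIn_le_one v (hW hv),
    fun v hv hv' ↦ hdeg v hv ▸ h.degreeIn_eq_zero v (hW hv) (hv'.imp_right (hguarded v hv)), ?_⟩
  exact (h.isForestOn.mono (sdiff_subset_sdiff hW Subset.rfl)).congr fun u hu v hv ↦
    hadj u (sdiff_subset hu) v (sdiff_subset hv)

lemma of_force (h : IsIFColoring G (M.force X) W A) : IsIFColoring G M W A :=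
  h.mono Subset.rfl h.subset (by simp) (fun _ _ ↦ .inl) fun _ _ ↦ id

lemma of_guard (h : IsIFColoring G (M.guard X) W A) : IsIFColoring G M W A :=
  h.mono Subset.rfl h.subset (by simp) (fun _ _ ↦ id) fun _ _ ↦ .inl

lemma empty (G : SimpleGraph α) (M : Marking α) : IsIFColoring G M ∅ ∅ := by
  constructor <;> simp [isForestOn_empty]

lemma self (hdeg : ∀ v ∈ W, degreeIn G W v = 0) (hf : ∀ v ∈ W, v ∉ M.forced) :
    IsIFColoring G M W W :=
  ⟨Subset.rfl, hf, fun v hv ↦ (hdeg v hv).le.trans zero_le_one, fun v hv _ ↦ hdeg v hv,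
    by simpa using isForestOn_empty⟩

lemma union (hA : IsIFColoring G M S A) (hB : IsIFColoring G M R B) (hSR : Disjoint S R)
    (hBS : ∀ v ∈ S, degreeIn G B v = 0) (hAR : ∀ v ∈ R, degreeIn G A v ≤ 1)
    (hAR' : ∀ v ∈ R, degreeIn G A v ≠ 0 → v ∉ M.guarded ∧ degreeIn G B v = 0)
    (hforest : IsForestOn G ((S \ A) ∪ (R \ B))) : IsIFColoring G M (S ∪ R) (A ∪ B) := by
  have hdeg (v) : degreeIn G (A ∪ B) v = degreeIn G A v + degreeIn G B v :=
    degreeIn_union (hSR.mono hA.subset hB.subset) v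
  have hBA (v) (hv : v ∈ B) : degreeIn G A v = 0 := degreeIn_eq_zero_iff.mpr fun u hu h ↦
    degreeIn_ne_zero hv h.symm (hBS u (hA.subset hu))
  have hAS := hA.subset
  have hBR := hB.subset
  have := hA.degreeIn_le_one
  have := hA.degreeIn_eq_zero
  have := hB.degreeIn_le_one
  have := hB.degreeIn_eq_zero
  have := hA.notMem_forced
  have := hB.notMem_forced
  refine ⟨union_subset_union hAS hBR, by grind, fun v hv ↦ ?_, fun v hv hv' ↦ ?_,
    hforest.mono (by grind)⟩
  · rw [hdeg]
    rcases mem_union.mp hv with hvS | hvR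
    · grind
    · by_cases hv0 : degreeIn G A v = 0 <;> grind
  · rw [hdeg]
    have hdisj := disjoint_left.mp hSR
    rcases mem_union.mp hv with hvS | hvR
    · grind
    · by_cases hv0 : degreeIn G A v = 0 <;> grind

lemma insert_independent (h : IsIFColoring G M W A) (ha : a ∉ W) (hf : a ∉ M.forced)
    (hA : degreeIn G A a = 0)
    (hW : ∀ v ∈ W, G.Adj a v → v ∉ M.guarded ∧ degreeIn G A v = 0) :
    IsIFColoring G M (insert a W) (insert a A) := by
  rw [insert_eq, insert_eq a A]
  refine (IsIFColoring.self (by simp [degreeIn_singleton]) (by simpa using hf)).union h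
    (disjoint_singleton_left.mpr ha) (by simpa using hA) (fun v _ ↦ ?_) (fun v hv hv' ↦ ?_)
    (by simpa using h.isForestOn)
  · grind [degreeIn_singleton]
  · exact hW v hv (by grind [degreeIn_singleton, G.adj_comm])

lemma extend (h : IsIFColoring G M W A) (hW : W ⊆ W')
    (hA : ∀ d ∈ W', d ∉ W → degreeIn G A d ≤ 1)
    (hguarded : ∀ d ∈ W', d ∉ W → d ∈ M.guarded → degreeIn G A d = 0)
    (hforest : ∀ d ∈ W', d ∉ W → degreeIn G (W' \ A) d ≤ 1) : IsIFColoring G M W' A := by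
  have := h.subset
  have := h.degreeIn_le_one
  have := h.degreeIn_eq_zero
  refine ⟨h.subset.trans hW, h.notMem_forced, by grind, by grind, ?_⟩
  exact h.isForestOn.extend fun d hd hd' ↦ hforest d (by grind) (by grind)

lemma insert_insert (h : IsIFColoring G M W A) (ha : a ∉ W) (ha' : a ∉ M.guarded)
    (hb' : b ∉ M.guarded) (haW : degreeIn G W a ≤ 1) (hbW : degreeIn G W b ≤ 1)
    (haA : degreeIn G A a ≠ 0) : IsIFColoring G M (insert a (insert b W)) A := by
  have hdeg := degreeIn_sdiff_add (G := G) h.subset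
  have hforest (v : α) : degreeIn G (insert v W \ A) v ≤ degreeIn G (W \ A) v := by
    rw [← degreeIn_insert_self (W \ A) v]
    exact degreeIn_mono (by grind) v
  have hb : IsIFColoring G M (insert b W) A := by
    refine h.extend (subset_insert b W) ?_ ?_ ?_ <;> intro d hd hdW <;>
      obtain rfl : d = b := by grind
    · grind
    · exact fun hd' ↦ absurd hd' hb'
    · grind
  refine hb.extend (subset_insert a _) ?_ ?_ ?_ <;> intro d hd hdW <;>
    obtain rfl : d = a := by grind
  · grind
  · exact fun hd' ↦ absurd hd' ha'
  · calc degreeIn G (insert d (insert b W) \ A) d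
        ≤ degreeIn G (insert b (insert d (W \ A))) d := degreeIn_mono (by grind) d
      _ ≤ degreeIn G (insert d (W \ A)) d + 1 := degreeIn_insert_le _ _ _
      _ = degreeIn G (W \ A) d + 1 := by rw [degreeIn_insert_self]
      _ ≤ 1 := by grind

lemma insert_of_sup_edge (h : IsIFColoring (G ⊔ edge a b) M W A) (hab : a ≠ b)
    (hnadj : ¬ G.Adj a b) (hv : v ∉ M.guarded)
    (hN : ∀ u ∈ W, G.Adj v u → u = a ∨ u = b) : IsIFColoring G M (insert v W) A := by
  have hmono := degreeIn_mono_graph (le_sup_left : G ≤ G ⊔ edge a b) A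
  have hAW := h.subset
  have hboth : ¬ (a ∈ A ∧ b ∈ A) := fun ⟨ha, hb⟩ ↦
    degreeIn_ne_zero hb (by simp [edge_adj, hab]) (h.degreeIn_eq_zero a (hAW ha) (.inl ha))
  have hdeg : degreeIn G A v ≤ 1 := by
    rcases not_and_or.mp hboth with ha | hb
    · exact degreeIn_le_card (S := {b}) (by grind)
    · exact degreeIn_le_card (S := {a}) (by grind)
  have := h.degreeIn_le_one
  have := h.degreeIn_eq_zero
  refine ⟨hAW.trans (subset_insert v W), h.notMem_forced, by grind, by grind, ?_⟩
  have hforest : IsForestOn G (insert v (W \ A)) :=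
    h.isForestOn.insert_of_sup_edge hab hnadj fun u hu ↦ hN u (sdiff_subset hu)
  exact hforest.mono (by grind)

end IsIFColoring

end Colorings

section Contraction

variable {M : Marking α} {A B R S W : Finset α} {X Y : Set α} {g r : α}

lemma isSparse_rewire (hg : g ∉ R)
    (hX : ∀ T ⊆ R, T.Nonempty → 3 * (#{v ∈ T | v ∈ X} : ℤ) < potential G M.weight T)
    (hXY : ∀ T ⊆ R,
      4 * (#{v ∈ T | v ∈ X} : ℤ) + 4 * #{v ∈ T | v ∈ Y} < potential G M.weight T + 2) :
    IsSparse (rewire G g Y) ((M.force (insert g X)).guard (insert g X)).weight (insert g R) := by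
  set M' := (M.force (insert g X)).guard (insert g X)
  have hmarked (T : Finset α) (hT : T ⊆ R) :
      potential G M.weight T ≤ potential (rewire G g Y) M'.weight T + 3 * #{v ∈ T | v ∈ X} := by
    have hgT : g ∉ T := fun h ↦ hg (hT h)
    have hmem (v) (hv : v ∈ T) (hvX : v ∈ insert g X) : v ∈ ({v ∈ T | v ∈ X} : Finset α) :=
      mem_filter.mpr ⟨hv, hvX.resolve_left (ne_of_mem_of_not_mem hv hgT)⟩
    have hrewire : potential (rewire G g Y) M'.weight T = potential G M'.weight T := by
      rw [potential, potential, edgesBetween_rewire hgT]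
    exact hrewire ▸ potential_le_potential_force_guard G M hmem
  intro T hT hne
  by_cases hgT : g ∈ T
  · have hsub : T.erase g ⊆ R := by grind
    have hinsert := potential_insert (G := rewire G g Y) (w := M'.weight) (notMem_erase g T)
    rw [insert_erase hgT, degreeIn_rewire_self (notMem_erase g T)] at hinsert
    have := hmarked _ hsub
    have := hXY _ hsub
    have := M'.two_le_weight g
    lia
  · have hsub : T ⊆ R := by grind
    have := hmarked T hsub
    have := hX T hsub hne
    lia

lemma IsIFColoring.union_of_rewire (hA : IsIFColoring G M S A)
    (hB : IsIFColoring (rewire G g {v | degreeIn G (S \ A) v ≠ 0})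
      ((M.force (insert g {v | degreeIn G A v ≠ 0})).guard (insert g {v | degreeIn G A v ≠ 0}))
      (insert g R) B)
    (hg : g ∉ R) (hSR : Disjoint S R) (hdeg : ∀ r ∈ R, degreeIn G S r ≤ 1)
    (hguarded : ∀ r ∈ R, r ∈ M.guarded → degreeIn G A r = 0) :
    IsIFColoring G M (S ∪ R) (A ∪ B) := by
  have hne {r : α} (hr : r ∈ R) : r ≠ g := ne_of_mem_of_not_mem hr hg
  have hBX (b) (hb : b ∈ B) : b ≠ g ∧ degreeIn G A b = 0 := by
    simpa [Marking.force, Marking.guard, not_or] using fun h ↦ hB.notMem_forced b hb (.inr h)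
  have hBR : B ⊆ R := fun b hb ↦ mem_of_mem_insert_of_ne (hB.subset hb) (hBX b hb).1
  have hBY (b) (hb : b ∈ B) : degreeIn G (S \ A) b = 0 := by
    have hzero := hB.degreeIn_eq_zero g (mem_insert_self g R) (.inr (.inr (.inl rfl)))
    simpa [rewire_adj_left (hBX b hb).1] using degreeIn_eq_zero_iff.mp hzero b hb
  have hBS (s) (hs : s ∈ S) : degreeIn G B s = 0 := by
    refine degreeIn_eq_zero_iff.mpr fun b hb hsb ↦ ?_
    refine degreeIn_ne_zero hs hsb.symm ?_
    rw [← degreeIn_sdiff_add hA.subset, hBY b hb, (hBX b hb).2]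
  have hBR' : IsIFColoring G M R B := hB.mono (subset_insert g R) hBR
    (fun u hu v hv ↦ rewire_adj_of_ne (hne hu) (hne hv)) (fun _ _ h ↦ .inl h) fun _ _ h ↦ .inl h
  refine hA.union hBR' hSR hBS (fun r hr ↦ (degreeIn_mono hA.subset r).trans (hdeg r hr))
    (fun r hr hrA ↦ ⟨fun h ↦ hrA (hguarded r hr h), ?_⟩) ?_
  · have hzero := hB.degreeIn_eq_zero r (mem_insert_of_mem hr) (.inr (.inr (.inr hrA)))
    rw [← hzero]
    exact degreeIn_congr fun b hb ↦ (rewire_adj_of_ne (hne hr) (hBX b hb).1).symm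
  · refine hA.isForestOn.union_of_rewire (hB.isForestOn.mono ?_) (by grind)
      (hSR.mono sdiff_subset sdiff_subset)
      (fun r hr ↦ (degreeIn_mono sdiff_subset r).trans (hdeg r (sdiff_subset hr))) fun _ _ ↦ id
    grind

/-- `G[W]` is a minimal counterexample: it is sparse and has no coloring, but all sparse marked
graphs on fewer vertices have one. -/
structure IsCritical (G : SimpleGraph α) (M : Marking α) (W : Finset α) : Prop where
  isSparse : IsSparse G M.weight W
  not_isIFColoring : ∀ A, ¬ IsIFColoring G M W A
  exists_isIFColoring : ∀ (G' : SimpleGraph α) (M' : Marking α) (W' : Finset α), #W' < #W →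
    IsSparse G' M'.weight W' → ∃ A, IsIFColoring G' M' W' A

lemma degreeIn_le_one_of_potential_le_two (h : IsSparse G M.weight W) (hS : S ⊆ W)
    (hpot : potential G M.weight S ≤ 2) (hr : r ∈ W) (hrS : r ∉ S) : degreeIn G S r ≤ 1 := by
  have := h (insert r S) (by grind) (insert_nonempty r S)
  rw [potential_insert hrS] at this
  have := M.weight_le_five r
  lia

namespace IsCritical

lemma nonempty (h : IsCritical G M W) : W.Nonempty :=
  nonempty_iff_ne_empty.mpr fun hW ↦ h.not_isIFColoring ∅ (hW ▸ IsIFColoring.empty G M)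

lemma exists_isIFColoring_of_ssubset (h : IsCritical G M W) (hS : S ⊂ W)
    (hsparse : IsSparse G M.weight S) : ∃ A, IsIFColoring G M S A :=
  h.exists_isIFColoring G M S (card_lt_card hS) hsparse

lemma exists_potential_le (h : IsCritical G M W) (hS : S ⊂ W) (hcard : 2 ≤ #S)
    (hpot : potential G M.weight S ≤ 2) (hA : IsIFColoring G M S A) :
    ∃ T ⊆ W \ S, T.Nonempty ∧
      potential G M.weight T ≤ 3 * #{v ∈ T | degreeIn G A v ≠ 0} := by
  by_contra! hT
  set X : Set α := {v | degreeIn G A v ≠ 0} with hX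
  set Y : Set α := {v | degreeIn G (S \ A) v ≠ 0} with hY
  obtain ⟨g, hgS⟩ : S.Nonempty := card_pos.mp (by lia)
  have hg : g ∉ W \ S := by simp [hgS]
  have hdisj : Disjoint S (W \ S) := disjoint_sdiff
  have hdeg (r) (hr : r ∈ W \ S) : degreeIn G S r ≤ 1 :=
    degreeIn_le_one_of_potential_le_two h.isSparse hS.1 hpot (mem_sdiff.mp hr).1 (mem_sdiff.mp hr).2
  have hguarded (r) (hr : r ∈ W \ S) (hrM : r ∈ M.guarded) : degreeIn G A r = 0 := by
    by_contra hrA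
    have := hT {r} (by simpa using hr) (singleton_nonempty r)
    rw [potential_singleton, filter_singleton, if_pos hrA, card_singleton] at this
    have := Marking.weight_le_three hrM
    lia
  have hsparse : IsSparse (rewire G g Y) ((M.force (insert g X)).guard (insert g X)).weight
      (insert g (W \ S)) := by
    refine isSparse_rewire hg (fun T hTW hne ↦ by simpa [hX] using hT T hTW hne)
      fun T hTW ↦ ?_
    have hunion := h.isSparse (S ∪ T) (union_subset hS.1 (hTW.trans sdiff_subset))
      ⟨g, by simp [hgS]⟩
    rw [potential_union (hdisj.mono_right hTW)] at hunion
    have hsplit : edgesBetween G T S = edgesBetween G T (S \ A) + edgesBetween G T A := by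
      rw [← edgesBetween_union_right sdiff_disjoint, sdiff_union_of_subset hA.subset]
    have hcomm := edgesBetween_comm (G := G) S T
    have hx := card_filter_degreeIn_ne_zero_le (G := G) T A
    have hy := card_filter_degreeIn_ne_zero_le (G := G) T (S \ A)
    simp only [hX, hY, Set.mem_ofPred_eq]
    lia
  obtain ⟨B, hB⟩ := h.exists_isIFColoring _ _ (insert g (W \ S)) (by grind) hsparse
  refine h.not_isIFColoring (A ∪ B) ?_
  rw [← union_sdiff_of_subset hS.1]
  exact hA.union_of_rewire hB hg hdisj hdeg hguarded

lemma two_le_potential (h : IsCritical G M W) (hS : S ⊂ W) (hne : S.Nonempty) :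
    2 ≤ potential G M.weight S := by
  rcases hne.card_pos.nat_succ_le.eq_or_lt with hcard | hcard
  · obtain ⟨v, rfl⟩ := card_eq_one.mp hcard.symm
    exact potential_singleton G M.weight v ▸ M.two_le_weight v
  by_contra! hpot
  obtain ⟨A, hA⟩ := h.exists_isIFColoring_of_ssubset hS (h.isSparse.mono hS.1)
  obtain ⟨T, hT, hneT, hTpot⟩ := h.exists_potential_le hS hcard (by lia) hA
  have hpos := h.isSparse T (hT.trans sdiff_subset) hneT
  have hunion := h.isSparse (S ∪ T) (union_subset hS.1 (hT.trans sdiff_subset))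
    (hne.mono subset_union_left)
  rw [potential_union (disjoint_sdiff.mono_right hT), edgesBetween_comm] at hunion
  have := card_filter_degreeIn_ne_zero_le (G := G) T A
  have := edgesBetween_mono_right (G := G) hA.subset T
  lia

lemma edgesBetween_eq_one (h : IsCritical G M W) (hS : S ⊂ W) (hcard : 2 ≤ #S)
    (hpot : potential G M.weight S = 2) (hA : IsIFColoring G M S A) :
    edgesBetween G (W \ S) S = 1 ∧ edgesBetween G (W \ S) A ≠ 0 := by
  obtain ⟨T, hT, hne, hTpot⟩ := h.exists_potential_le hS hcard hpot.le hA
  have hx := card_filter_degreeIn_ne_zero_le (G := G) T A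
  have hTS := edgesBetween_mono_right (G := G) hA.subset T
  have hsub : S ∪ T ⊆ W := union_subset hS.1 (hT.trans sdiff_subset)
  have hunion := h.isSparse (S ∪ T) hsub (hne.mono subset_union_right)
  have htwo : T ⊂ W → 2 ≤ potential G M.weight T := (h.two_le_potential · hne)
  have htwo' : S ∪ T ⊂ W → 2 ≤ potential G M.weight (S ∪ T) :=
    (h.two_le_potential · (hne.mono subset_union_right))
  rw [potential_union (disjoint_sdiff.mono_right hT), edgesBetween_comm] at hunion htwo'
  have hTW : T ⊂ W := by
    obtain ⟨s, hs⟩ : S.Nonempty := card_pos.mp (by lia)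
    exact ssubset_of_subset_of_ne (hT.trans sdiff_subset) (by have := hS.1 hs; grind)
  have hfull : T = W \ S := by
    by_contra hne'
    have := htwo' (ssubset_of_subset_of_ne hsub (by grind))
    have := htwo hTW
    lia
  subst hfull
  have := htwo hTW
  lia

lemma three_le_potential (h : IsCritical G M W) (hS : S ⊂ W) (hcard : 2 ≤ #S) :
    3 ≤ potential G M.weight S := by
  have hne : S.Nonempty := card_pos.mp (by lia)
  by_contra! hlt
  have hpot : potential G M.weight S = 2 := by
    have := h.two_le_potential hS hne
    lia
  obtain ⟨A, hA⟩ := h.exists_isIFColoring_of_ssubset hS (h.isSparse.mono hS.1)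
  obtain ⟨hone, hA0⟩ := h.edgesBetween_eq_one hS hcard hpot hA
  obtain ⟨r, hr, hrA⟩ := exists_ne_zero_of_sum_ne_zero hA0
  obtain ⟨s, hs, hrs⟩ := degreeIn_ne_zero_iff.mp hrA
  have hsparse : IsSparse G (M.force {s}).weight S := fun T hT hT' ↦ by
    have := h.two_le_potential (hT.trans_ssubset hS) hT'
    have := potential_le_potential_force G M (X := {s}) (S := {s}) (T := T) (by simp)
    rw [card_singleton] at this
    lia
  obtain ⟨B, hB⟩ := h.exists_isIFColoring G (M.force {s}) S (card_lt_card hS) hsparse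
  have hsB : s ∉ B := fun hsB ↦ hB.notMem_forced s hsB (.inr rfl)
  obtain ⟨-, hB0⟩ := h.edgesBetween_eq_one hS hcard hpot hB.of_force
  have hedges : edgesBetween G (W \ S) (insert s B) ≤ edgesBetween G (W \ S) S :=
    edgesBetween_mono_right (insert_subset (hA.subset hs) hB.subset) _
  rw [insert_eq, edgesBetween_union_right (disjoint_singleton_left.mpr hsB)] at hedges
  have : edgesBetween G (W \ S) {s} ≠ 0 := fun h0 ↦
    degreeIn_ne_zero (mem_singleton_self s) hrs (sum_eq_zero_iff.mp h0 r hr)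
  lia

lemma two_le_degreeIn (h : IsCritical G M W) {v : α} (hv : v ∈ W) : 2 ≤ degreeIn G W v := by
  by_contra! hdeg
  set N : Set α := {u | G.Adj v u}
  have hdeg' : degreeIn G (W.erase v) v ≤ 1 := (degreeIn_mono (erase_subset v W) v).trans (by lia)
  have hsparse : IsSparse G (M.force N).weight (W.erase v) := fun T hT hne ↦ by
    have := h.two_le_potential (hT.trans_ssubset (erase_ssubset hv)) hne
    have := potential_le_potential_force G M (X := N) (S := {u ∈ T | G.Adj v u}) (T := T)
      fun u hu hvu ↦ mem_filter.mpr ⟨hu, hvu⟩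
    have : #{u ∈ T | G.Adj v u} ≤ 1 := (degreeIn_mono hT v).trans hdeg'
    lia
  obtain ⟨A, hA⟩ := h.exists_isIFColoring G (M.force N) _ (card_erase_lt_of_mem hv) hsparse
  have hvA : degreeIn G A v = 0 :=
    degreeIn_eq_zero_iff.mpr fun u hu hvu ↦ hA.notMem_forced u hu (.inr hvu)
  refine h.not_isIFColoring A (hA.of_force.extend (erase_subset v W) ?_ ?_ ?_) <;>
    intro d hd hd' <;> obtain rfl : d = v := by grind
  · lia
  · exact fun _ ↦ hvA
  · exact (degreeIn_mono sdiff_subset d).trans (by lia)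

end IsCritical

end Contraction

section ReducibleConfigurations

/-- The unmarked vertices of degree two in `G[W]`; they make up the threads of `G[W]`. -/
noncomputable def threadVertices (G : SimpleGraph α) (M : Marking α) (W : Finset α) : Finset α :=
  {v ∈ W | v ∉ M.forced ∧ v ∉ M.guarded ∧ degreeIn G W v = 2}

variable {M : Marking α} {S W : Finset α} {a b f u v x : α}

lemma mem_threadVertices : v ∈ threadVertices G M W ↔
    v ∈ W ∧ v ∉ M.forced ∧ v ∉ M.guarded ∧ degreeIn G W v = 2 := by
  simp [threadVertices]

lemma threadVertices_subset (G : SimpleGraph α) (M : Marking α) (W : Finset α) :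
    threadVertices G M W ⊆ W :=
  filter_subset _ W

lemma degreeIn_le_one_of_notMem (hd : degreeIn G W v = 2) (hu : u ∈ W) (hvu : G.Adj v u)
    (hS : S ⊆ W) (huS : u ∉ S) : degreeIn G S v ≤ 1 := by
  have := degreeIn_erase_add_one hu hvu
  have := degreeIn_mono (G := G) (subset_erase.mpr ⟨hS, huS⟩) v
  lia

lemma IsSparse.sup_edge (h : IsSparse G M.weight W) (hab : a ≠ b) (hnadj : ¬ G.Adj a b)
    (hf : f ∈ W) (hfM : f ∈ M.forced) (hfa : G.Adj f a) (hfb : G.Adj f b) :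
    IsSparse (G ⊔ edge a b) M.weight (W.erase f) := fun T hT hne ↦ by
  have hpot := h T (hT.trans (erase_subset f W)) hne
  simp only [potential, edgesBetween_sup ((disjoint_edge G).mpr hnadj),
    edgesBetween_edge_self hab] at hpot ⊢
  split_ifs with hboth
  · have hfT : f ∉ T := by grind
    have hpos := h (insert f T) (by grind) (insert_nonempty f T)
    have := two_le_degreeIn hab hboth.1 hboth.2 hfa hfb
    have := Marking.weight_le_four hfM
    rw [potential_insert hfT, potential] at hpos
    lia
  · simpa using hpot

namespace IsCritical

lemma isSparse_guard_singleton (h : IsCritical G M W) (hS : S ⊂ W) (v : α) :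
    IsSparse G (M.guard {v}).weight S := fun T hT hne ↦ by
  rcases hne.card_pos.nat_succ_le.eq_or_lt with hcard | hcard
  · obtain ⟨u, rfl⟩ := card_eq_one.mp hcard.symm
    rw [potential_singleton]
    exact two_pos.trans_le (Marking.two_le_weight _ u)
  · have := h.three_le_potential (hT.trans_ssubset hS) hcard
    have := potential_le_potential_guard G M (X := {v}) (S := {v}) (T := T) (by simp)
    rw [card_singleton] at this
    lia

lemma mem_guarded_of_adj_threadVertices (h : IsCritical G M W) (ha : a ∈ threadVertices G M W)
    (hb : b ∈ threadVertices G M W) (hab : G.Adj a b) (hv : v ∈ W) (hav : G.Adj a v)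
    (hvb : v ≠ b) : v ∈ M.guarded := by
  by_contra hvM
  obtain ⟨haW, haf, hag, ha2⟩ := mem_threadVertices.mp ha
  obtain ⟨hbW, -, hbg, hb2⟩ := mem_threadVertices.mp hb
  set S := W \ {a, b} with hS
  have hSW : S ⊂ W := by grind
  obtain ⟨A, hA⟩ := h.exists_isIFColoring G _ S (card_lt_card hSW)
    (h.isSparse_guard_singleton hSW v)
  have hvS : v ∈ S := by grind [G.ne_of_adj hav]
  have hvA : degreeIn G A v = 0 := hA.degreeIn_eq_zero v hvS (.inr (.inr rfl))
  replace hA : IsIFColoring G M S A := hA.of_guard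
  have haS : degreeIn G S a ≤ 1 := degreeIn_le_one_of_notMem ha2 hbW hab sdiff_subset (by grind)
  have hbS : degreeIn G S b ≤ 1 :=
    degreeIn_le_one_of_notMem hb2 haW hab.symm sdiff_subset (by grind)
  by_cases hcase : degreeIn G A a = 0 ∧ degreeIn G A b = 0
  · have hAa : IsIFColoring G M (insert a S) (insert a A) := by
      refine hA.insert_independent (by grind) haf hcase.1 fun u hu hau ↦ ?_
      obtain rfl : u = v := by
        by_contra huv
        exact (IFPartition.two_le_degreeIn huv hu hvS hau hav).not_gt (by lia)
      exact ⟨hvM, hvA⟩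
    refine h.not_isIFColoring _ (hAa.extend (by grind) ?_ ?_ ?_) <;> intro d hd hd' <;>
      obtain rfl : d = b := by grind
    · have := degreeIn_insert_le (G := G) A a d
      lia
    · exact fun hd ↦ absurd hd hbg
    · exact degreeIn_le_one_of_notMem hb2 haW hab.symm sdiff_subset (by simp)
  · rcases not_and_or.mp hcase with ha0 | hb0
    · have := hA.insert_insert (by grind) hag hbg haS hbS ha0
      exact h.not_isIFColoring A ((by grind : insert a (insert b S) = W) ▸ this)
    · have := hA.insert_insert (by grind) hbg hag hbS haS hb0
      exact h.not_isIFColoring A ((by grind : insert b (insert a S) = W) ▸ this)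

lemma isSparse_force_of_adj (h : IsCritical G M W) (hv : v ∈ W) {N : Finset α}
    (hN : N ⊆ W) (hvN : ∀ u ∈ N, G.Adj v u) :
    IsSparse G (M.force {y | degreeIn G N y ≠ 0}).weight (W \ insert v N) := fun T hT hne ↦ by
  set K : Finset α := {y ∈ T | degreeIn G N y ≠ 0}
  set Q : Finset α := {u ∈ N | degreeIn G T u ≠ 0}
  have hforce := potential_le_potential_force G M (X := {y | degreeIn G N y ≠ 0}) (S := K) (T := T)
    fun y hy hyN ↦ mem_filter.mpr ⟨hy, hyN⟩
  have hTW : T ⊂ W := (hT.trans (by grind)).trans_ssubset (erase_ssubset hv)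
  rcases le_or_gt #K 1 with hK | hK
  · have := h.two_le_potential hTW hne
    lia
  have hthree := h.three_le_potential hTW (hK.trans_le (card_filter_le _ _))
  have hK' : #K ≤ edgesBetween G N T :=
    (card_filter_degreeIn_ne_zero_le T N).trans (edgesBetween_comm T N).le
  have hQ : #Q ≤ edgesBetween G N T := card_filter_degreeIn_ne_zero_le N T
  have hQT : Disjoint Q T := disjoint_left.mpr (by grind)
  have hvQ : degreeIn G Q v = #Q := congrArg card (filter_true_of_mem (by grind))
  have hvQT : v ∉ Q ∪ T := by grind [G.irrefl]
  have hpos := h.isSparse (insert v (Q ∪ T))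
    (insert_subset hv (union_subset ((filter_subset _ N).trans hN) hTW.1)) (insert_nonempty v _)
  rw [potential_insert hvQT, potential_union hQT, edgesBetween_filter_degreeIn_ne_zero,
    degreeIn_union hQT, hvQ] at hpos
  have := potential_le_five_mul_card G M Q
  have := M.weight_le_five v
  lia

lemma exists_adj_notMem_threadVertices (h : IsCritical G M W) (hv : v ∈ W) (hf : v ∉ M.forced) :
    ∃ u ∈ W, G.Adj v u ∧ u ∉ threadVertices G M W := by
  by_contra! hthread
  set N : Finset α := {u ∈ W | G.Adj v u}
  set X : Set α := {y | degreeIn G N y ≠ 0}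
  have hNW : N ⊆ W := filter_subset _ W
  obtain ⟨A, hA⟩ := h.exists_isIFColoring G _ (W \ insert v N) (card_lt_card (by grind))
    (h.isSparse_force_of_adj hv hNW (by grind))
  have hAW := hA.subset
  have hNA {n : α} (hn : n ∈ N) : degreeIn G A n = 0 := degreeIn_eq_zero_iff.mpr fun y hy hny ↦
    hA.notMem_forced y hy (.inr (degreeIn_ne_zero hn hny.symm))
  have hvW (u) (hu : u ∈ W \ insert v N) : ¬ G.Adj v u := by grind
  have hAv : IsIFColoring G M (insert v (W \ insert v N)) (insert v A) :=
    hA.of_force.insert_independent (by simp) hf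
      (degreeIn_eq_zero_iff.mpr fun u hu ↦ hvW u (hAW hu)) fun u hu hvu ↦ absurd hvu (hvW u hu)
  refine h.not_isIFColoring _ (hAv.extend (by grind) ?_ ?_ ?_) <;> intro n hn hn'
  all_goals
    have hnN : n ∈ N := by grind
    obtain ⟨-, -, hng, hn2⟩ := mem_threadVertices.mp (hthread n hn (mem_filter.mp hnN).2)
  · have := degreeIn_insert_le (G := G) A v n
    have := hNA hnN
    lia
  · exact fun hn ↦ absurd hn hng
  · exact degreeIn_le_one_of_notMem hn2 hv (mem_filter.mp hnN).2.symm sdiff_subset (by simp)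

lemma not_triangle (h : IsCritical G M W) (hf : f ∈ W) (ha : a ∈ threadVertices G M W) (hx : x ∈ W)
    (hfM : f ∈ M.forced) (hfg : f ∉ M.guarded) (hfa : G.Adj f a) (hax : G.Adj a x) :
    ¬ G.Adj x f := by
  intro hxf
  obtain ⟨haW, haf, -, -⟩ := mem_threadVertices.mp ha
  have hfax := G.ne_of_adj hfa
  have hax' := G.ne_of_adj hax
  have hxf' := G.ne_of_adj hxf
  have hcard : #{f, a, x} = 3 := card_eq_three.mpr ⟨f, a, x, hfax, hxf'.symm, hax', rfl⟩
  have hpot : potential G M.weight {f, a, x} = M.weight f + M.weight a + M.weight x - 12 := by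
    rw [potential_insert (by grind), potential_insert (by simpa using hax'), potential_singleton,
      degreeIn_insert (by simpa using hax'), degreeIn_singleton, degreeIn_singleton, if_pos hax,
      if_pos hfa, if_pos hxf.symm]
    ring
  have hsub : {f, a, x} ⊆ W := by grind
  have hwf := Marking.weight_le_four hfM
  have hwa := M.weight_le_five a
  have hwx := M.weight_le_five x
  have hW : W = {f, a, x} := by
    by_contra hne
    have := h.three_le_potential (ssubset_of_subset_of_ne hsub (Ne.symm hne)) (by lia)
    lia
  have hpos := h.isSparse _ hsub (insert_nonempty f _)
  have hxg : x ∉ M.guarded := fun hxg ↦ by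
    have := Marking.weight_le_three hxg
    lia
  have hA : IsIFColoring G M {a} {a} :=
    IsIFColoring.self (by simp [degreeIn_singleton]) (by simpa using haf)
  refine h.not_isIFColoring {a} (hA.extend (by simpa using haW) ?_ ?_ ?_) <;> intro d hd hda
  · grind [degreeIn_singleton]
  · grind
  · have hda' : G.Adj d a := by grind [G.adj_comm]
    have := degreeIn_sdiff_add (G := G) (singleton_subset_iff.mpr haW) d
    have := degreeIn_singleton (G := G) a d
    have := degreeIn_lt_card (G := G) hd
    grind

lemma notMem_threadVertices_of_adj_forced (h : IsCritical G M W) (hf : f ∈ W) (hfM : f ∈ M.forced)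
    (hfg : f ∉ M.guarded) (hf2 : degreeIn G W f = 2) (hfa : G.Adj f a) :
    a ∉ threadVertices G M W := by
  intro ha
  obtain ⟨haW, -, -, ha2⟩ := mem_threadVertices.mp ha
  obtain ⟨y, hyW, hya, hfy, hfN⟩ := exists_other_neighbor hf2 haW hfa
  obtain ⟨x, hxW, -, hax, haN⟩ := exists_other_neighbor ha2 hf hfa.symm
  have hyx : y ≠ x := fun hyx ↦ h.not_triangle hf ha hxW hfM hfg hfa hax (hyx ▸ hfy.symm)
  have hnadj : ¬ G.Adj a y := fun hay ↦
    (haN y hyW hay).elim (G.ne_of_adj hfy).symm hyx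
  obtain ⟨A, hA⟩ := h.exists_isIFColoring _ _ (W.erase f) (card_erase_lt_of_mem hf)
    (h.isSparse.sup_edge hya.symm hnadj hf hfM hfa hfy)
  have := hA.insert_of_sup_edge hya.symm hnadj hfg fun u hu ↦
    hfN u (erase_subset f W hu)
  exact h.not_isIFColoring A (insert_erase hf ▸ this)

end IsCritical

end ReducibleConfigurations

section Discharging

/-- In the discharging argument a thread vertex has charge `1`, and it sends
`absorption G M W v / 2` to each neighbor `v`. -/
noncomputable def absorption (G : SimpleGraph α) (M : Marking α) (W : Finset α) (v : α) : ℕ :=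
  if v ∈ threadVertices G M W then 0 else if v ∈ M.guarded then 2 else 1

variable {M : Marking α} {W : Finset α} {v z : α}

namespace IsCritical

lemma two_le_sum_absorption (h : IsCritical G M W) (hz : z ∈ threadVertices G M W) :
    2 ≤ ∑ u ∈ W with G.Adj z u, absorption G M W u := by
  obtain ⟨a, b, hab, hN⟩ := card_eq_two.mp (mem_threadVertices.mp hz).2.2.2
  have hmem (u) : u ∈ W ∧ G.Adj z u ↔ u = a ∨ u = b := by
    simpa using Finset.ext_iff.mp hN u
  obtain ⟨haW, hza⟩ := (hmem a).mpr (.inl rfl)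
  obtain ⟨hbW, hzb⟩ := (hmem b).mpr (.inr rfl)
  have hab' (ha : a ∈ threadVertices G M W) : b ∈ M.guarded :=
    h.mem_guarded_of_adj_threadVertices hz ha hza hbW hzb hab.symm
  have hba' (hb : b ∈ threadVertices G M W) : a ∈ M.guarded :=
    h.mem_guarded_of_adj_threadVertices hz hb hzb haW hza hab
  rw [hN, sum_pair hab]
  grind [absorption, mem_threadVertices]

lemma two_mul_card_threadVertices_le (h : IsCritical G M W) :
    2 * #(threadVertices G M W) ≤
      ∑ v ∈ W \ threadVertices G M W,
        absorption G M W v * degreeIn G (threadVertices G M W) v := by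
  set Z := threadVertices G M W
  calc 2 * #Z = ∑ _z ∈ Z, 2 := by rw [sum_const, smul_eq_mul, mul_comm]
    _ ≤ ∑ z ∈ Z, ∑ u ∈ W with G.Adj z u, absorption G M W u :=
      sum_le_sum fun z hz ↦ h.two_le_sum_absorption hz
    _ = ∑ u ∈ W, ∑ z ∈ Z with G.Adj u z, absorption G M W u :=
      sum_comm' fun z u ↦ by simp only [mem_filter, G.adj_comm z u]; tauto
    _ = ∑ u ∈ W, absorption G M W u * degreeIn G Z u :=
      sum_congr rfl fun u _ ↦ by rw [sum_const, smul_eq_mul, mul_comm, degreeIn]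
    _ = ∑ u ∈ W \ Z, absorption G M W u * degreeIn G Z u :=
      (sum_subset sdiff_subset fun u _ hu ↦ by simp_all [absorption, Z]).symm

lemma degreeIn_threadVertices_lt (h : IsCritical G M W) (hv : v ∈ W) (hf : v ∉ M.forced) :
    degreeIn G (threadVertices G M W) v < degreeIn G W v := by
  obtain ⟨u, hu, hvu, huZ⟩ := h.exists_adj_notMem_threadVertices hv hf
  have := degreeIn_erase_add_one hu hvu
  have := degreeIn_mono (G := G) (subset_erase.mpr ⟨threadVertices_subset G M W, huZ⟩) v
  lia

lemma two_mul_weight_add_absorption_le (h : IsCritical G M W) (hv : v ∈ W)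
    (hvZ : v ∉ threadVertices G M W) :
    2 * (M.weight v - 2 * degreeIn G W v) +
      absorption G M W v * degreeIn G (threadVertices G M W) v ≤ 0 := by
  have hdeg := h.two_le_degreeIn hv
  have hZ : degreeIn G (threadVertices G M W) v ≤ degreeIn G W v :=
    degreeIn_mono (threadVertices_subset G M W) v
  have hlt := h.degreeIn_threadVertices_lt hv
  simp only [absorption, Marking.weight, if_neg hvZ]
  by_cases hg : v ∈ M.guarded <;> by_cases hf : v ∈ M.forced <;>
    simp only [hg, hf, if_true, if_false, not_false_eq_true, forall_const] at hlt ⊢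
  · lia
  · lia
  · by_cases hd : degreeIn G W v = 2
    · have : degreeIn G (threadVertices G M W) v = 0 := degreeIn_eq_zero_iff.mpr fun u hu hvu ↦
        h.notMem_threadVertices_of_adj_forced hv hf hg hd hvu hu
      lia
    · lia
  · have : degreeIn G W v ≠ 2 := fun hd ↦ hvZ (mem_threadVertices.mpr ⟨hv, hf, hg, hd⟩)
    lia

lemma false (h : IsCritical G M W) : False := by
  set Z := threadVertices G M W
  have hZ : ∑ v ∈ Z, (M.weight v - 2 * degreeIn G W v) = #Z := by
    rw [cast_card]
    refine sum_congr rfl fun z hz ↦ ?_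
    obtain ⟨-, hf, hg, hd⟩ := mem_threadVertices.mp hz
    rw [Marking.weight_of_notMem hf hg, hd]
    rfl
  have hsplit : potential G M.weight W = #Z + ∑ v ∈ W \ Z, (M.weight v - 2 * degreeIn G W v) := by
    rw [potential, edgesBetween, ← hZ, add_comm, sum_sdiff (threadVertices_subset G M W),
      sum_sub_distrib, ← mul_sum]
    push_cast
    rfl
  have hdischarge : 2 * ∑ v ∈ W \ Z, (M.weight v - 2 * degreeIn G W v) +
      ∑ v ∈ W \ Z, (absorption G M W v * degreeIn G Z v : ℤ) ≤ 0 := by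
    rw [mul_sum, ← sum_add_distrib]
    exact sum_nonpos fun v hv ↦
      h.two_mul_weight_add_absorption_le (mem_sdiff.mp hv).1 (mem_sdiff.mp hv).2
  have hcard : 2 * (#Z : ℤ) ≤ ∑ v ∈ W \ Z, (absorption G M W v * degreeIn G Z v : ℤ) := by
    exact_mod_cast h.two_mul_card_threadVertices_le
  have := h.isSparse W Subset.rfl h.nonempty
  lia

end IsCritical

theorem IsSparse.exists_isIFColoring (h : IsSparse G M.weight W) : ∃ A, IsIFColoring G M W A := by
  induction hn : #W using Nat.strong_induction_on generalizing G M W with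
  | _ n ih =>
    by_contra! hW
    exact IsCritical.false ⟨h, hW, fun G' M' W' hlt h' ↦ ih #W' (hn ▸ hlt) h' rfl⟩

end Discharging

section IndependentPart

variable {M : Marking α} {J W : Finset α} {w : α → ℤ} {v : α}

lemma IsSparse.three_mul_degreeIn_lt (h : IsSparse G w W) (hJW : J ⊆ W) (hJ : ∀ u ∈ J, w u ≤ 1)
    (hv : v ∈ W) : 3 * (degreeIn G J v : ℤ) < w v := by
  set N : Finset α := {u ∈ J | G.Adj v u} with hN
  have hvN : v ∉ N := by simp [hN]
  have hpos := h (insert v N) (insert_subset hv ((filter_subset _ J).trans hJW))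
    (insert_nonempty v N)
  have hdeg : degreeIn G N v = degreeIn G J v := by
    rw [hN, degreeIn, filter_filter]
    simp only [and_self, degreeIn]
  have hsum : ∑ u ∈ N, w u ≤ degreeIn G J v := by
    simpa [degreeIn] using sum_le_card_nsmul N w 1 fun u hu ↦ hJ u (mem_filter.mp hu).1
  rw [potential_insert hvN, hdeg, potential] at hpos
  lia

lemma IsSparse.force_guard (h : IsSparse G w (J ∪ W)) (hJW : Disjoint J W)
    (hJ : ∀ u ∈ J, w u ≤ 1) (hW : ∀ u ∈ W, w u ≤ M.weight u) :
    IsSparse G ((M.force {v | degreeIn G J v ≠ 0}).guard {v | degreeIn G J v ≠ 0}).weight W := by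
  intro T hT hne
  set N : Finset α := {u ∈ J | degreeIn G T u ≠ 0} with hN
  have hNJ : N ⊆ J := filter_subset _ J
  have hpos := h (N ∪ T) (union_subset_union hNJ hT) (hne.mono subset_union_right)
  rw [potential_union (hJW.mono hNJ hT), hN, edgesBetween_filter_degreeIn_ne_zero, ← hN] at hpos
  have hpotN : potential G w N ≤ #N := by
    have := sum_le_card_nsmul N w 1 fun u hu ↦ hJ u (hNJ hu)
    simp only [potential, mul_one, nsmul_eq_mul] at this ⊢
    lia
  have hpotT : potential G w T ≤ potential G M.weight T :=
    sub_le_sub_right (sum_le_sum fun u hu ↦ hW u (hT hu)) _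
  have hcardN : #N ≤ edgesBetween G J T := card_filter_degreeIn_ne_zero_le J T
  have hcardT : #{u ∈ T | degreeIn G J u ≠ 0} ≤ edgesBetween G J T :=
    (card_filter_degreeIn_ne_zero_le T J).trans (edgesBetween_comm T J).le
  have := potential_le_potential_force_guard G M (X := {v | degreeIn G J v ≠ 0})
    (S := {u ∈ T | degreeIn G J u ≠ 0}) (T := T) fun u hu hu' ↦ mem_filter.mpr ⟨hu, hu'⟩
  lia

lemma IsSparse.exists_isIFColoring_union (h : IsSparse G w (J ∪ W)) (hJW : Disjoint J W)
    (hJ : ∀ u ∈ J, w u ≤ 1) (hW : ∀ u ∈ W, w u ≤ M.weight u) (hf : ∀ u ∈ J, u ∉ M.forced) :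
    ∃ A, IsIFColoring G M (J ∪ W) (J ∪ A) := by
  obtain ⟨A, hA⟩ := (h.force_guard hJW hJ hW).exists_isIFColoring
  have hdeg (v) (hv : v ∈ J ∪ W) : 3 * (degreeIn G J v : ℤ) < w v :=
    h.three_mul_degreeIn_lt subset_union_left hJ hv
  have hself : IsIFColoring G M J J := IsIFColoring.self (fun v hv ↦ by
    have := hdeg v (mem_union_left W hv)
    have := hJ v hv
    lia) hf
  have hAJ (v) (hv : v ∈ J) : degreeIn G A v = 0 := degreeIn_eq_zero_iff.mpr fun u hu hvu ↦
    hA.notMem_forced u hu (.inr (degreeIn_ne_zero hv hvu.symm))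
  have hJW' (v) (hv : v ∈ W) : 3 * (degreeIn G J v : ℤ) < M.weight v :=
    (hdeg v (mem_union_right J hv)).trans_le (hW v hv)
  refine ⟨A, hself.union hA.of_guard.of_force hJW hAJ (fun v hv ↦ ?_)
    (fun v hv hv0 ↦ ⟨fun hg ↦ ?_, hA.degreeIn_eq_zero v hv (.inr (.inr hv0))⟩)
    (by simpa using hA.isForestOn)⟩
  · have := hJW' v hv
    have := M.weight_le_five v
    lia
  · have := hJW' v hv
    have := Marking.weight_le_three hg
    lia

end IndependentPart

section AssignedGraphs

variable {I F U : Set α}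

lemma two_mul_card_edgeSet_induce (G : SimpleGraph α) (T : Finset α) :
    2 * Nat.card ((⊤ : G.Subgraph).induce (T : Set α)).edgeSet = edgesBetween G T T := by
  set H := (⊤ : G.Subgraph).induce (T : Set α) with hH
  let K : SimpleGraph T := H.coe
  have hadj (u v : T) : K.Adj u v ↔ G.Adj u v := by
    simp [K, hH, -Subgraph.coe_adj, Subgraph.coe]
  have hcard : Nat.card H.edgeSet = Nat.card K.edgeSet := by
    rw [← H.image_coe_edgeSet_coe, Nat.card_image_of_injective
      (Sym2.map.injective Subtype.val_injective)]
    rfl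
  rw [hcard, Nat.card_eq_fintype_card, ← edgeFinset_card, ← K.sum_degrees_eq_twice_card_edges,
    edgesBetween, ← T.sum_coe_sort]
  refine sum_congr rfl fun u _ ↦ ?_
  rw [← card_neighborFinset_eq_degree, degreeIn, ← card_map (Function.Embedding.subtype _)]
  congr 1
  ext v
  simp only [mem_map, mem_neighborFinset, hadj, mem_filter]
  simp [and_comm]

/-- The contribution of a vertex to the potential of an assigned graph `I ⊔ F ⊔ U`. -/
noncomputable def assignedWeight (I F U : Set α) (v : α) : ℤ :=
  (if v ∈ I then 1 else 0) + 4 * (if v ∈ F then 1 else 0) + 5 * if v ∈ U then 1 else 0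

lemma rho_induce_top (G : SimpleGraph α) (I F U : Set α) (T : Finset α) :
    rho G I F U ((⊤ : G.Subgraph).induce (T : Set α)) = potential G (assignedWeight I F U) T := by
  have hcard (X : Set α) : (((T : Set α) ∩ X).ncard : ℤ) = ∑ v ∈ T, if v ∈ X then 1 else 0 := by
    rw [sum_boole, ← Set.ncard_coe_finset]
    congr 2
    ext v
    simp
  have hedges := two_mul_card_edgeSet_induce G T
  simp only [rho, potential, assignedWeight, Subgraph.induce_verts, hcard, sum_add_distrib,
    ← mul_sum]
  lia

lemma isSparse_assignedWeight (h : ∀ H : G.Subgraph, H.verts.Nonempty → 0 < rho G I F U H)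
    (W : Finset α) : IsSparse G (assignedWeight I F U) W := fun T _ hne ↦
  rho_induce_top G I F U T ▸ h _ (by simpa using hne)

lemma assignedWeight_of_mem (h : IsAssignment I F U) {v : α} (hv : v ∈ I) :
    assignedWeight I F U v = 1 := by
  obtain ⟨-, hIF, hIU, -⟩ := h
  simp [assignedWeight, hv, hIF.notMem_of_mem_left hv, hIU.notMem_of_mem_left hv]

lemma assignedWeight_of_notMem (h : IsAssignment I F U) {v : α} (hv : v ∉ I) :
    assignedWeight I F U v = (⟨F, ∅⟩ : Marking α).weight v := by
  obtain ⟨hcover, -, -, hFU⟩ := h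
  by_cases hF : v ∈ F
  · simp [assignedWeight, Marking.weight, hv, hF, hFU.notMem_of_mem_left hF]
  · have hU : v ∈ U := (hcover.ge (Set.mem_univ v)).resolve_left (by simp [hv, hF])
    simp [assignedWeight, Marking.weight, hv, hF, hU]

lemma IsIFColoring.isIFPartition [Fintype α] {M : Marking α} {A : Finset α}
    (h : IsIFColoring G M univ A) : IsIFPartition G A (A : Set α)ᶜ := by
  refine ⟨Set.union_compl_self _, disjoint_compl_right, fun u hu v hv huv ↦ ⟨?_, ?_⟩, ?_⟩
  · exact degreeIn_eq_zero_iff.mp (h.degreeIn_eq_zero u (mem_univ u) (.inl hu)) v hv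
  · rintro w ⟨huw, hwv⟩
    have := two_le_degreeIn huv hu hv huw.symm hwv
    have := h.degreeIn_le_one w (mem_univ w)
    lia
  · rw [← coe_compl, compl_eq_univ_sdiff]
    exact h.isForestOn.isAcyclic_induce

end AssignedGraphs

end IFPartition

/-- Theorem 1.6: if `G` is an assigned graph with vertex set partitioned as `I ⊔ F ⊔ U`
and every nonempty subgraph has positive potential, then `G` has an I,F-partition
`𝓘 ⊔ 𝓕` with `I ⊆ 𝓘` and `F ⊆ 𝓕`. -/
theorem ifPartition_of_potential_pos {V : Type*} [Fintype V] (G : SimpleGraph V)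
    (I F U : Set V) (hassign : IsAssignment I F U)
    (hpot : ∀ H : G.Subgraph, H.verts.Nonempty → 0 < rho G I F U H) :
    ∃ A B : Set V, IsIFPartition G A B ∧ I ⊆ A ∧ F ⊆ B := by
  classical
  open IFPartition in
  obtain ⟨A, hA⟩ := (isSparse_assignedWeight hpot _).exists_isIFColoring_union
    (M := ⟨F, ∅⟩) (disjoint_compl_right (a := I.toFinset))
    (fun v hv ↦ (assignedWeight_of_mem hassign (Set.mem_toFinset.mp hv)).le)
    (fun v hv ↦ (assignedWeight_of_notMem hassign (by simpa using hv)).le)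
    (fun v hv ↦ hassign.2.1.notMem_of_mem_left (Set.mem_toFinset.mp hv))
  rw [Finset.union_compl] at hA
  refine ⟨_, _, hA.isIFPartition, fun v hv ↦ by simp [hv], fun v hv hvA ↦ ?_⟩
  exact hA.notMem_forced v hvA hv
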